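/- arXiv:1706.00392 — 2 statements merged into one kernel-verified Lean document; each statement's English description precedes it below -/
import Mathlib

section
/- There exists a constant C > 0 such that for all sufficiently large real x, writing y = log log x, the number of primes p with 3 ≤ p ≤ x for which (p²−1)/φ(p²−1) > (log y)^{1/3} is at most C · π(x) / (log y)^{1/6}. In particular this count is o(π(x)). -/
open Filter Topology

lemma aux_dvd (q N M : ℕ) (hM : M ∣ N.factorial) (hq : Nat.Coprime q M) (a : ℤ) :
    (M : ℤ) ∣ ∏ k ∈ Finset.range N, ((q : ℤ) * (k + 1) + a) := by
  have hM0 : M ≠ 0 := fun h => N.factorial_ne_zero (by simpa [h] using hM)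
  have : NeZero M := ⟨hM0⟩
  rw [← ZMod.intCast_zmod_eq_zero_iff_dvd]
  have hu : (q : ZMod M) * (q : ZMod M)⁻¹ = 1 := ZMod.coe_mul_inv_eq_one q hq
  set b : ℕ := ((a : ZMod M) * (q : ZMod M)⁻¹).val with hb
  have hb' : (b : ZMod M) = (a : ZMod M) * (q : ZMod M)⁻¹ := by
    rw [hb, ZMod.natCast_val, ZMod.cast_id', id]
  have h1 : ((∏ k ∈ Finset.range N, ((q : ℤ) * (k + 1) + a) : ℤ) : ZMod M)
      = (q : ZMod M) ^ N * (((b + 1).ascFactorial N : ℕ) : ZMod M) := by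
    rw [Nat.ascFactorial_eq_prod_range]
    push_cast
    rw [← Finset.card_range N, ← Finset.prod_const, Finset.card_range, ← Finset.prod_mul_distrib]
    refine Finset.prod_congr rfl fun k _ => ?_
    rw [hb']
    linear_combination (-(a : ZMod M)) * hu
  rw [h1]
  have : (((b + 1).ascFactorial N : ℕ) : ZMod M) = 0 := by
    rw [ZMod.natCast_eq_zero_iff]
    exact hM.trans (Nat.factorial_dvd_ascFactorial _ _)
  rw [this, mul_zero]

lemma aux_prod (q N X : ℕ) (hq : q.Prime) (hX : X < q * N) :
    ∏ p ∈ (Finset.Ioc N X).filter (fun p => p.Prime ∧ q ∣ p ^ 2 - 1), p ≤ (2 * q) ^ (2 * N) := by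
  set P := (Finset.Ioc N X).filter (fun p => p.Prime ∧ q ∣ p ^ 2 - 1) with hP
  have hq2 := hq.two_le
  set e := N.factorial.factorization q with he
  set M := N.factorial / q ^ e with hMdef
  have hMe : q ^ e * M = N.factorial := Nat.ordProj_mul_ordCompl_eq_self _ _
  have hMdvd : M ∣ N.factorial := Dvd.intro_left _ hMe
  have hcop : Nat.Coprime q M := Nat.coprime_ordCompl hq N.factorial_ne_zero
  have hMpos : 0 < M := Nat.pos_of_dvd_of_pos hMdvd N.factorial_pos
  set A : ℕ := ∏ k ∈ Finset.range N, ((q * (k + 1)) ^ 2 - 1) with hA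
  have hpos : ∀ k, 2 ≤ q * (k + 1) := fun k => by nlinarith
  have hApos : 0 < A := Finset.prod_pos fun k _ => by
    have := hpos k
    have : 2 ^ 2 ≤ (q * (k + 1)) ^ 2 := Nat.pow_le_pow_left this 2
    omega
  have hAM : M * M ∣ A := by
    have h1 := aux_dvd q N M hMdvd hcop 1
    have h2 := aux_dvd q N M hMdvd hcop (-1)
    have h3 := mul_dvd_mul h1 h2
    rw [← Finset.prod_mul_distrib] at h3
    rw [← Int.natCast_dvd_natCast]
    suffices hs : (A : ℤ) = ∏ x ∈ Finset.range N,
        ((q : ℤ) * (x + 1) + 1) * ((q : ℤ) * (x + 1) + -1) by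
      rw [hs, Nat.cast_mul]; exact h3
    rw [hA]
    push_cast
    refine Finset.prod_congr rfl fun k _ => ?_
    rw [Nat.cast_sub (by have := hpos k; nlinarith)]
    push_cast
    ring
  have hPprime : ∀ p ∈ P, p.Prime := fun p hp => (Finset.mem_filter.1 hp).2.1
  have hPA : ∏ p ∈ P, p ∣ A := by
    apply Finset.prod_primes_dvd
    · exact fun p hp => (hPprime p hp).prime
    · intro p hp
      obtain ⟨hp1, hp2, hp3⟩ := Finset.mem_filter.1 hp
      obtain ⟨hp4, hp5⟩ := Finset.mem_Ioc.1 hp1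
      have hfac : p ^ 2 - 1 = (p + 1) * (p - 1) := by
        have := Nat.sq_sub_sq p 1
        simpa using this
      rw [hfac, hq.dvd_mul] at hp3
      have key : ∃ k ∈ Finset.range N, p ∣ (q * (k + 1)) ^ 2 - 1 := by
        have hp2' := hp2.two_le
        rcases hp3 with ⟨c, hc⟩ | ⟨c, hc⟩
        · have hc0 : c ≠ 0 := by rintro rfl; simp at hc
          obtain ⟨d, rfl⟩ := Nat.exists_eq_succ_of_ne_zero hc0
          refine ⟨d, ?_, ?_⟩
          · rw [Finset.mem_range]
            by_contra hcon
            have : q * N ≤ q * d := Nat.mul_le_mul_left _ (by omega)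
            rw [Nat.succ_eq_add_one, mul_add] at hc
            omega
          · rw [Nat.succ_eq_add_one] at hc
            rw [← hc]
            exact ⟨p + 2, by rw [Nat.sub_eq_iff_eq_add (by nlinarith)]; ring⟩
        · have hc0 : c ≠ 0 := by rintro rfl; simp at hc; omega
          obtain ⟨d, rfl⟩ := Nat.exists_eq_succ_of_ne_zero hc0
          refine ⟨d, ?_, ?_⟩
          · rw [Finset.mem_range]
            by_contra hcon
            have : q * N ≤ q * d := Nat.mul_le_mul_left _ (by omega)
            rw [Nat.succ_eq_add_one, mul_add] at hc
            omega
          · rw [Nat.succ_eq_add_one] at hc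
            rw [← hc]
            obtain ⟨r, rfl⟩ := Nat.exists_eq_add_of_le hp2'
            refine ⟨r, ?_⟩
            rw [show 2 + r - 1 = r + 1 by omega, Nat.sub_eq_iff_eq_add (by nlinarith)]
            ring
      obtain ⟨k, hk, hk'⟩ := key
      exact hk'.trans (Finset.dvd_prod_of_mem (fun k => (q * (k + 1)) ^ 2 - 1) hk)
  have hcopP : Nat.Coprime (∏ p ∈ P, p) (M * M) := by
    apply Nat.Coprime.prod_left
    intro p hp
    have h1 : Nat.Coprime p N.factorial := by
      rw [(hPprime p hp).coprime_iff_not_dvd, (hPprime p hp).dvd_factorial]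
      have := (Finset.mem_Ioc.1 (Finset.mem_filter.1 hp).1).1
      omega
    have h2 := h1.coprime_dvd_right hMdvd
    exact h2.mul_right h2
  have hdvd := hcopP.mul_dvd_of_dvd_of_dvd hPA hAM
  have hle := Nat.le_of_dvd hApos hdvd
  have hAle : A ≤ (q ^ N * N.factorial) ^ 2 := by
    calc A ≤ ∏ k ∈ Finset.range N, (q * (k + 1)) ^ 2 :=
          Finset.prod_le_prod' fun k _ => Nat.sub_le _ _
      _ = _ := by
          rw [Finset.prod_pow, Finset.prod_mul_distrib, Finset.prod_const, Finset.card_range,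
            Finset.prod_range_add_one_eq_factorial]
  have hqe : q ^ e ≤ 2 ^ N := by
    have := Fact.mk hq
    have h1 : (q - 1) * e ≤ N := by
      have := sub_one_mul_padicValNat_factorial (p := q) N
      rw [he, Nat.factorization_def _ hq, this]
      exact Nat.sub_le _ _
    have h2 : q ≤ 2 ^ (q - 1) := by
      have := Nat.lt_two_pow_self (n := q - 1)
      omega
    calc q ^ e ≤ (2 ^ (q - 1)) ^ e := Nat.pow_le_pow_left h2 e
      _ = 2 ^ ((q - 1) * e) := by rw [pow_mul]
      _ ≤ 2 ^ N := Nat.pow_le_pow_right (by norm_num) h1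
  have h5 : (∏ p ∈ P, p) * (M * M) ≤ (2 * q) ^ (2 * N) * (M * M) := by
    calc _ ≤ A := hle
      _ ≤ (q ^ N * N.factorial) ^ 2 := hAle
      _ = (q ^ N * (q ^ e * M)) ^ 2 := by rw [hMe]
      _ ≤ (q ^ N * (2 ^ N * M)) ^ 2 := by gcongr
      _ = _ := by rw [mul_comm 2 N, pow_mul, mul_pow]; ring
  exact Nat.le_of_mul_le_mul_right h5 (by positivity)

lemma aux_tel (m : ℕ) (hm : 1 ≤ m) : ∏ k ∈ Finset.Icc 2 m, ((k : ℝ) / (k - 1)) = m := by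
  induction m, hm using Nat.le_induction with
  | base => simp
  | succ n hn ih =>
    rw [Finset.prod_Icc_succ_top (by omega), ih]
    have : (n : ℝ) ≠ 0 := by positivity
    push_cast
    rw [add_sub_cancel_right]
    field_simp

lemma aux_small (s : Finset ℕ) (hs : ∀ q ∈ s, 2 ≤ q) (z : ℝ) (hz : 1 ≤ z) :
    ∏ q ∈ s.filter (fun q : ℕ => (q : ℝ) ≤ z), ((q : ℝ) / (q - 1)) ≤ z := by
  have hfl : 1 ≤ ⌊z⌋₊ := Nat.le_floor (by simpa using hz)
  calc _ ≤ ∏ k ∈ Finset.Icc 2 ⌊z⌋₊, ((k : ℝ) / (k - 1)) := by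
        apply Finset.prod_le_prod_of_subset_of_one_le
        · intro q hq
          obtain ⟨h1, h2⟩ := Finset.mem_filter.1 hq
          exact Finset.mem_Icc.2 ⟨hs q h1, Nat.le_floor h2⟩
        · intro q hq
          have : (2 : ℝ) ≤ q := by exact_mod_cast hs q (Finset.mem_filter.1 hq).1
          exact div_nonneg (by linarith) (by linarith)
        · intro q hq _
          have : (2 : ℝ) ≤ q := by exact_mod_cast (Finset.mem_Icc.1 hq).1
          rw [le_div_iff₀ (by linarith)]; linarith
    _ = ⌊z⌋₊ := aux_tel _ hfl
    _ ≤ z := Nat.floor_le (by linarith)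

lemma aux_exp (q : ℕ) (hq : 2 ≤ q) : (q : ℝ) / (q - 1) ≤ Real.exp (2 * (1 / q)) := by
  have h2 : (2 : ℝ) ≤ q := by exact_mod_cast hq
  have h := Real.add_one_le_exp (2 * (1 / (q : ℝ)))
  refine le_trans ?_ h
  rw [div_le_iff₀ (by linarith)]
  have : (2 * (1 / (q : ℝ)) + 1) * (q - 1) = q + 1 - 2 / q := by field_simp; ring
  rw [this]
  have : 2 / (q : ℝ) ≤ 1 := by rw [div_le_one (by linarith)]; exact h2
  linarith

lemma aux_prod_exp (s : Finset ℕ) (hs : ∀ q ∈ s, 2 ≤ q) :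
    ∏ q ∈ s, ((q : ℝ) / (q - 1)) ≤ Real.exp (2 * ∑ q ∈ s, 1 / (q : ℝ)) := by
  rw [Finset.mul_sum, Real.exp_sum]
  apply Finset.prod_le_prod
  · intro q hq
    have : (2 : ℝ) ≤ q := by exact_mod_cast hs q hq
    exact div_nonneg (by linarith) (by linarith)
  · exact fun q hq => aux_exp q (hs q hq)

lemma aux_phi (n : ℕ) (hn : n ≠ 0) :
    (n : ℝ) / (Nat.totient n : ℝ) = ∏ q ∈ n.primeFactors, ((q : ℝ) / (q - 1)) := by
  have h := Nat.totient_mul_prod_primeFactors n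
  have h' : (Nat.totient n : ℝ) * ∏ p ∈ n.primeFactors, (p : ℝ)
      = n * ∏ p ∈ n.primeFactors, ((p : ℝ) - 1) := by
    have := congrArg (Nat.cast (R := ℝ)) h
    push_cast at this
    rw [this]
    congr 1
    refine Finset.prod_congr rfl fun p hp => ?_
    rw [Nat.cast_sub (Nat.prime_of_mem_primeFactors hp).one_lt.le]; simp
  have hphi : (Nat.totient n : ℝ) ≠ 0 := by
    have := Nat.totient_pos.2 (Nat.pos_of_ne_zero hn)
    positivity
  have h1 : ∏ p ∈ n.primeFactors, ((p : ℝ) - 1) ≠ 0 := by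
    rw [Finset.prod_ne_zero_iff]
    intro p hp
    have : (1 : ℝ) < p := by exact_mod_cast (Nat.prime_of_mem_primeFactors hp).one_lt
    linarith
  rw [Finset.prod_div_distrib, div_eq_div_iff hphi h1]
  rw [← h']; ring

lemma aux_large (n : ℕ) (hn : n ≠ 0) (T : ℝ) (hT : Real.exp 1 ≤ T)
    (hlog : Real.log n ≤ 2 * T) :
    ∑ q ∈ n.primeFactors.filter (fun q : ℕ => T < q), 1 / (q : ℝ) ≤ 2 := by
  have hT0 : 0 < T := lt_of_lt_of_le (Real.exp_pos 1) hT
  have hlT : 1 ≤ Real.log T := (Real.le_log_iff_exp_le hT0).2 hT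
  set s := n.primeFactors.filter (fun q : ℕ => T < q) with hs
  have hcard : (s.card : ℝ) ≤ 2 * T := by
    refine le_trans ?_ hlog
    have h1 : ∏ q ∈ s, q ≤ n := by
      apply Nat.le_of_dvd (Nat.pos_of_ne_zero hn)
      exact (Finset.prod_dvd_prod_of_subset _ _ _ (Finset.filter_subset _ _)).trans
        (Nat.prod_primeFactors_dvd n)
    have hqpos : ∀ q ∈ s, 0 < q := fun q hq => (Nat.prime_of_mem_primeFactors (Finset.mem_filter.1 hq).1).pos
    calc (s.card : ℝ) = ∑ q ∈ s, (1 : ℝ) := by simp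
      _ ≤ ∑ q ∈ s, Real.log q := by
          apply Finset.sum_le_sum
          intro q hq
          refine hlT.trans (Real.log_le_log hT0 (Finset.mem_filter.1 hq).2.le)
      _ = Real.log ((∏ q ∈ s, q : ℕ) : ℝ) := by
          push_cast
          rw [Real.log_prod]
          intro q hq
          have := hqpos q hq
          positivity
      _ ≤ Real.log n := by
          apply Real.log_le_log
          · exact_mod_cast Finset.prod_pos hqpos
          · exact_mod_cast h1
  calc _ ≤ ∑ q ∈ s, 1 / T := by
        apply Finset.sum_le_sum
        intro q hq
        exact one_div_le_one_div_of_le hT0 (Finset.mem_filter.1 hq).2.le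
    _ = s.card / T := by simp [div_eq_mul_inv]
    _ ≤ 2 := by rw [div_le_iff₀ hT0]; exact hcard

lemma aux_ratio (n : ℕ) (hn : n ≠ 0) (T z : ℝ) (hT : Real.exp 1 ≤ T) (hz : 1 ≤ z)
    (hlog : Real.log n ≤ 2 * T)
    (hS : ∑ q ∈ n.primeFactors.filter (fun q : ℕ => z < q ∧ (q : ℝ) ≤ T), 1 / (q : ℝ) ≤ 1) :
    (n : ℝ) / (Nat.totient n : ℝ) ≤ z * Real.exp 6 := by
  have hP : ∀ q ∈ n.primeFactors, 2 ≤ q := fun q hq => (Nat.prime_of_mem_primeFactors hq).two_le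
  rw [aux_phi n hn, ← Finset.prod_filter_mul_prod_filter_not _ (fun q : ℕ => (q : ℝ) ≤ z)]
  refine mul_le_mul (aux_small _ hP z hz) ?_ ?_ (by linarith)
  · refine (aux_prod_exp _ fun q hq => hP q (Finset.mem_filter.1 hq).1).trans ?_
    rw [Real.exp_le_exp]
    have h1 := aux_large n hn T hT hlog
    have : ∑ q ∈ n.primeFactors.filter (fun q : ℕ => ¬ (q : ℝ) ≤ z), 1 / (q : ℝ)
        ≤ ∑ q ∈ n.primeFactors.filter (fun q : ℕ => z < q ∧ (q : ℝ) ≤ T), 1 / (q : ℝ)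
          + ∑ q ∈ n.primeFactors.filter (fun q : ℕ => T < q), 1 / (q : ℝ) := by
      rw [← Finset.sum_union]
      · apply Finset.sum_le_sum_of_subset_of_nonneg
        · intro q hq
          simp only [Finset.mem_union, Finset.mem_filter, not_le] at hq ⊢
          rcases le_or_gt (q : ℝ) T with h | h
          · exact Or.inl ⟨hq.1, hq.2, h⟩
          · exact Or.inr ⟨hq.1, h⟩
        · intros; positivity
      · rw [Finset.disjoint_filter]
        intro q _ h
        exact not_lt.2 h.2
    linarith
  · apply Finset.prod_nonneg
    intro q hq
    have : (2 : ℝ) ≤ q := by exact_mod_cast hP q (Finset.mem_filter.1 hq).1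
    exact div_nonneg (by linarith) (by linarith)

-- tail sum
lemma aux_tail_step (n : ℕ) (hn : 1 ≤ n) :
    1 / (((n + 1 : ℕ) : ℝ) * √((n + 1 : ℕ) : ℝ)) ≤ 2 * (1 / √(n : ℝ)) - 2 * (1 / √((n + 1 : ℕ) : ℝ)) := by
  have ha : 0 < √(n : ℝ) := Real.sqrt_pos.2 (by exact_mod_cast hn)
  have hab : √(n : ℝ) ≤ √((n + 1 : ℕ) : ℝ) := Real.sqrt_le_sqrt (by push_cast; linarith)
  have h1 : √(n : ℝ) ^ 2 = n := Real.sq_sqrt (by positivity)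
  have h2 : √((n + 1 : ℕ) : ℝ) ^ 2 = n + 1 := by rw [Real.sq_sqrt (by positivity)]; push_cast; ring
  have h3 : ((n + 1 : ℕ) : ℝ) = √((n + 1 : ℕ) : ℝ) ^ 2 := by rw [h2]; push_cast; ring
  set a := √(n : ℝ)
  set b := √((n + 1 : ℕ) : ℝ)
  have hb : 0 < b := ha.trans_le hab
  rw [h3]
  have hd : (b - a) * (b + a) = 1 := by nlinarith
  have : 2 * (1 / a) - 2 * (1 / b) - 1 / (b ^ 2 * b) = (2 * (b - a) * b ^ 2 - a) / (a * b ^ 3) := by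
    field_simp
    try ring
  have h4 : 0 ≤ (2 * (b - a) * b ^ 2 - a) / (a * b ^ 3) := by
    apply div_nonneg _ (by positivity)
    have : 0 ≤ b - a := by linarith
    have h5 : (b - a) * (2 * b) ≥ 1 := by nlinarith
    nlinarith
  linarith

lemma aux_tail (m M : ℕ) (hm : 1 ≤ m) :
    ∑ q ∈ Finset.Ioc m M, 1 / ((q : ℝ) * √(q : ℝ)) ≤ 2 * (1 / √(m : ℝ)) := by
  rcases le_or_gt m M with h | h
  · have : ∑ q ∈ Finset.Ioc m M, 1 / ((q : ℝ) * √(q : ℝ)) ≤ 2 * (1 / √(m : ℝ)) - 2 * (1 / √(M : ℝ)) := by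
      induction M, h using Nat.le_induction with
      | base => simp
      | succ n hn ih =>
        rw [Finset.sum_Ioc_succ_top (by omega)]
        linarith [aux_tail_step n (by omega)]
    have h2 : 0 ≤ 2 * (1 / √(M : ℝ)) := by positivity
    linarith
  · rw [Finset.Ioc_eq_empty (by omega)]; simp
lemma aux_count (x : ℝ) (q : ℕ) (hq : q.Prime) (hx : 1 < x) (hqx : (q : ℝ) ≤ Real.log x)
    (hlx : Real.log x ^ 2 ≤ √x) :
    (((Finset.Icc 1 ⌊x⌋₊).filter (fun p => p.Prime ∧ q ∣ p ^ 2 - 1)).card : ℝ)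
      ≤ 49 * (x / Real.log x) / √(q : ℝ) := by
  set X := ⌊x⌋₊ with hX
  have hXx : (X : ℝ) ≤ x := Nat.floor_le (by linarith)
  have hlog : 0 < Real.log x := Real.log_pos hx
  have hq2 : (2 : ℝ) ≤ q := by exact_mod_cast hq.two_le
  have hq0 : 0 < q := hq.pos
  have hqlex : (q : ℝ) ≤ x := hqx.trans ((Real.log_le_sub_one_of_pos (by linarith)).trans (by linarith))
  set N := X / q + 1 with hN
  have hXN : X < q * N := by
    rw [hN, mul_comm]; exact Nat.lt_div_mul_add hq0 |>.trans_eq (by ring)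
  have hNle : (N : ℝ) ≤ 2 * x / q := by
    rw [hN]; push_cast
    have h1 : ((X / q : ℕ) : ℝ) ≤ (X : ℝ) / q := Nat.cast_div_le
    have h2 : (X : ℝ) / q ≤ x / q := by gcongr
    have h3 : 1 ≤ x / q := by rw [le_div_iff₀ (by linarith)]; linarith
    have : 2 * x / q = x / q + x / q := by ring
    linarith
  set S := (Finset.Icc 1 X).filter (fun p => p.Prime ∧ q ∣ p ^ 2 - 1) with hS
  set P := (Finset.Ioc N X).filter (fun p => p.Prime ∧ q ∣ p ^ 2 - 1) with hP
  set Q := (Finset.Ioc 0 N).filter Nat.Prime with hQ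
  set U := S.filter (fun p : ℕ => √x < p) with hU
  have hUsub : U ⊆ Q ∪ P := by
    intro p hp
    simp only [hU, hS, hQ, hP, Finset.mem_filter, Finset.mem_union, Finset.mem_Icc, Finset.mem_Ioc] at hp ⊢
    obtain ⟨⟨⟨h1, h2⟩, h3, h4⟩, h5⟩ := hp
    rcases le_or_gt p N with h | h
    · exact Or.inl ⟨⟨h1, h⟩, h3⟩
    · exact Or.inr ⟨⟨h, h2⟩, h3, h4⟩
  have hlogS : ∑ p ∈ P, Real.log p ≤ 2 * N * Real.log (2 * q) := by
    have h0 : ∀ p ∈ P, 0 < p := fun p hp => (Finset.mem_filter.1 hp).2.1.pos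
    have h1 := aux_prod q N X hq hXN
    have h2 : ((∏ p ∈ P, p : ℕ) : ℝ) ≤ (2 * q) ^ (2 * N) := by exact_mod_cast h1
    calc ∑ p ∈ P, Real.log p = Real.log ((∏ p ∈ P, p : ℕ) : ℝ) := by
          push_cast
          rw [Real.log_prod]
          intro p hp
          have := h0 p hp
          positivity
      _ ≤ Real.log ((2 * q) ^ (2 * N)) := Real.log_le_log (by exact_mod_cast Finset.prod_pos h0) h2
      _ = _ := by rw [Real.log_pow]; push_cast; ring
  have hlogQ : ∑ p ∈ Q, Real.log p ≤ Real.log 4 * N := by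
    have := Chebyshev.theta_le_log4_mul_x (x := (N : ℝ)) (by positivity)
    rwa [Chebyshev.theta, Nat.floor_natCast] at this
  have hl4 : Real.log 4 ≤ 2 * Real.log (2 * q) := by
    have : (4 : ℝ) = 2 ^ 2 := by norm_num
    rw [this, Real.log_pow]
    push_cast
    have := Real.log_le_log (x := 2) (y := 2 * (q : ℝ)) (by norm_num) (by linarith)
    linarith
  have hnn : ∀ p : ℕ, 0 ≤ Real.log (p : ℝ) := fun p => Real.log_natCast_nonneg p
  have hUlog : ∑ p ∈ U, Real.log p ≤ 4 * N * Real.log (2 * q) := by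
    calc ∑ p ∈ U, Real.log p ≤ ∑ p ∈ Q ∪ P, Real.log p :=
          Finset.sum_le_sum_of_subset_of_nonneg hUsub fun p _ _ => hnn p
      _ ≤ ∑ p ∈ Q, Real.log p + ∑ p ∈ P, Real.log p := by
          rw [← Finset.sum_union_inter]
          have : 0 ≤ ∑ p ∈ Q ∩ P, Real.log (p : ℝ) := Finset.sum_nonneg fun p _ => hnn p
          linarith
      _ ≤ Real.log 4 * N + 2 * N * Real.log (2 * q) := by linarith
      _ ≤ _ := by
        have : (0 : ℝ) ≤ N := by positivity
        nlinarith
  have hUcard : (U.card : ℝ) * (Real.log x / 2) ≤ ∑ p ∈ U, Real.log p := by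
    rw [← nsmul_eq_mul, ← Finset.sum_const]
    apply Finset.sum_le_sum
    intro p hp
    have h1 : √x < p := (Finset.mem_filter.1 hp).2
    rw [← Real.log_sqrt (by linarith)]
    exact Real.log_le_log (Real.sqrt_pos.2 (by linarith)) h1.le
  have hlq : Real.log (2 * q) ≤ 3 * √(q : ℝ) := by
    have h1 : Real.log (2 * q) = 2 * Real.log √(2 * (q : ℝ)) := by
      rw [Real.log_sqrt (by positivity)]; ring
    have h2 := Real.log_le_sub_one_of_pos (x := √(2 * (q : ℝ))) (Real.sqrt_pos.2 (by positivity))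
    have h3 : √(2 * (q : ℝ)) ≤ 3 / 2 * √(q : ℝ) := by
      rw [Real.sqrt_mul (by norm_num)]
      gcongr
      rw [Real.sqrt_le_left (by norm_num)]; norm_num
    linarith
  set r := √(q : ℝ) with hr
  have hr1 : 1 ≤ r := by rw [hr, Real.one_le_sqrt]; linarith
  have hrq : (q : ℝ) = r ^ 2 := by rw [hr, Real.sq_sqrt (by positivity)]
  have hUfin : (U.card : ℝ) ≤ 48 * (x / Real.log x) / r := by
    have h1 : (U.card : ℝ) * (Real.log x / 2) ≤ 4 * (2 * x / q) * (3 * r) := by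
      refine (hUcard.trans hUlog).trans ?_
      have : 0 ≤ Real.log (2 * q) := Real.log_nonneg (by linarith)
      gcongr
    rw [hrq] at h1
    have h2 : 48 * (x / Real.log x) / r = (4 * (2 * x / r ^ 2) * (3 * r)) / (Real.log x / 2) := by
      field_simp; try norm_num
    rw [h2, le_div_iff₀ (by positivity)]
    exact h1
  have hsmall : ((S.filter (fun p : ℕ => ¬ √x < p)).card : ℝ) ≤ (x / Real.log x) / r := by
    have h1 : S.filter (fun p : ℕ => ¬ √x < p) ⊆ Finset.Icc 1 ⌊√x⌋₊ := by
      intro p hp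
      simp only [hS, Finset.mem_filter, Finset.mem_Icc, not_lt] at hp ⊢
      exact ⟨hp.1.1.1, Nat.le_floor hp.2⟩
    have h2 := Finset.card_le_card h1
    rw [Nat.card_Icc, Nat.add_sub_cancel] at h2
    have h3 : ((S.filter (fun p : ℕ => ¬ √x < p)).card : ℝ) ≤ √x :=
      (Nat.cast_le.2 h2).trans (Nat.floor_le (Real.sqrt_nonneg x))
    refine h3.trans ?_
    rw [le_div_iff₀ (by linarith), le_div_iff₀ hlog]
    have h4 : r ≤ Real.log x := by
      refine le_trans ?_ hqx
      rw [hrq]; nlinarith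
    have h5 : √x * √x = x := Real.mul_self_sqrt (by linarith)
    have h6 : r * Real.log x ≤ √x := by nlinarith
    nlinarith [Real.sqrt_nonneg x]
  have hsplit := Finset.card_filter_add_card_filter_not (s := S) (fun p : ℕ => √x < p)
  have hsplit' : (S.card : ℝ) = U.card + (S.filter (fun p : ℕ => ¬ √x < p)).card := by
    rw [← hsplit]; push_cast; rfl
  rw [hsplit']
  have : 49 * (x / Real.log x) / r = 48 * (x / Real.log x) / r + (x / Real.log x) / r := by ring
  linarith

lemma aux_pi : ∀ᶠ x : ℝ in atTop, x / Real.log x ≤ 4 * (Nat.primeCounting ⌊x⌋₊ : ℝ) := by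
  have h1 : ∀ᶠ x : ℝ in atTop, Real.log x ≤ 0.01 * x := by
    have := Real.isLittleO_log_id_atTop.bound (c := 0.01) (by norm_num)
    filter_upwards [this, eventually_gt_atTop 1] with x hx hx1
    have h0 := Real.log_pos hx1
    simp only [id, Real.norm_eq_abs] at hx
    rwa [abs_of_pos h0, abs_of_pos (by linarith)] at hx
  filter_upwards [h1, eventually_gt_atTop 100] with x hx hx1
  have hlog : 0 < Real.log x := Real.log_pos (by linarith)
  have h2 := Chebyshev.psi_ge' (x := x) (by linarith)
  have h3 := Chebyshev.psi_le_primeCounting_mul_log' x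
  have h4 : Real.log (x + 2) ≤ Real.log x + 1 := by
    have h5 : Real.log (x + 2) ≤ Real.log (2 * x) := Real.log_le_log (by linarith) (by linarith)
    rw [Real.log_mul (by norm_num) (by linarith)] at h5
    linarith [Real.log_two_lt_d9]
  have h6 := Real.log_two_gt_d9
  rw [div_le_iff₀ hlog]
  nlinarith

lemma aux_bad (x z : ℝ) (hx : 1 < x) (hz : 1 ≤ z) (hT : Real.exp 1 ≤ Real.log x)
    (hlx : Real.log x ^ 2 ≤ √x)
    (hpi : x / Real.log x ≤ 4 * (Nat.primeCounting ⌊x⌋₊ : ℝ)) (B : Finset ℕ)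
    (hB : ∀ p ∈ B, p.Prime ∧ 3 ≤ p ∧ (p : ℝ) ≤ x ∧
      z * Real.exp 6 < ((p ^ 2 - 1 : ℕ) : ℝ) / (Nat.totient (p ^ 2 - 1) : ℝ)) :
    (B.card : ℝ) ≤ 784 * (Nat.primeCounting ⌊x⌋₊ : ℝ) / √z := by
  set T := Real.log x with hTdef
  set W := (Nat.primeCounting ⌊x⌋₊ : ℝ) with hPi
  have hPi0 : 0 ≤ W := by positivity
  set m := ⌊z⌋₊ with hm
  have hm1 : 1 ≤ m := Nat.le_floor (by simpa using hz)
  set R := (Finset.Ioc m ⌊T⌋₊).filter Nat.Prime with hR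
  have hstep : ∀ p ∈ B, (1 : ℝ) ≤ ∑ q ∈ R, if q ∣ p ^ 2 - 1 then 1 / (q : ℝ) else 0 := by
    intro p hp
    obtain ⟨h1, h2, h3, h4⟩ := hB p hp
    have hp9 : 9 ≤ p ^ 2 := by nlinarith
    have hn : p ^ 2 - 1 ≠ 0 := by omega
    have hlog : Real.log ((p ^ 2 - 1 : ℕ) : ℝ) ≤ 2 * T := by
      have h5 : ((p ^ 2 - 1 : ℕ) : ℝ) ≤ x ^ 2 := by
        calc ((p ^ 2 - 1 : ℕ) : ℝ) ≤ ((p ^ 2 : ℕ) : ℝ) := Nat.cast_le.2 (Nat.sub_le _ _)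
          _ = (p : ℝ) ^ 2 := by push_cast; rfl
          _ ≤ x ^ 2 := by gcongr
      have h6 := Real.log_le_log (by exact_mod_cast Nat.pos_of_ne_zero hn) h5
      rw [Real.log_pow] at h6
      exact_mod_cast h6
    by_contra hcon
    push Not at hcon
    have h7 := aux_ratio (p ^ 2 - 1) hn T z hT hz hlog ?_
    · linarith
    · refine le_trans ?_ hcon.le
      rw [← Finset.sum_filter]
      apply Finset.sum_le_sum_of_subset_of_nonneg
      · intro q hq
        simp only [hR, Finset.mem_filter, Finset.mem_Ioc] at hq ⊢
        obtain ⟨h8, h9, h10⟩ := hq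
        exact ⟨⟨⟨(Nat.floor_lt (by linarith)).2 h9, Nat.le_floor h10⟩,
          Nat.prime_of_mem_primeFactors h8⟩, Nat.dvd_of_mem_primeFactors h8⟩
      · intros; positivity
  have hq : ∀ q ∈ R, (∑ p ∈ B, if q ∣ p ^ 2 - 1 then 1 / (q : ℝ) else 0)
      ≤ 196 * W * (1 / ((q : ℝ) * √(q : ℝ))) := by
    intro q hq
    simp only [hR, Finset.mem_filter, Finset.mem_Ioc] at hq
    obtain ⟨⟨h1, h2⟩, h3⟩ := hq
    have hq0 : (0 : ℝ) < q := by exact_mod_cast h3.pos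
    have hqT : (q : ℝ) ≤ T := (Nat.le_floor_iff' h3.ne_zero).1 h2
    have hc := aux_count x q h3 hx hqT hlx
    have hcard : ((B.filter (fun p => q ∣ p ^ 2 - 1)).card : ℝ) ≤ 49 * (x / Real.log x) / √(q : ℝ) := by
      refine le_trans ?_ hc
      rw [Nat.cast_le]
      apply Finset.card_le_card
      intro p hp
      obtain ⟨hp1, hp2⟩ := Finset.mem_filter.1 hp
      obtain ⟨h4, h5, h6, _⟩ := hB p hp1
      exact Finset.mem_filter.2 ⟨Finset.mem_Icc.2 ⟨h4.pos, Nat.le_floor h6⟩, h4, hp2⟩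
    have hs : 0 < √(q : ℝ) := Real.sqrt_pos.2 hq0
    rw [← Finset.sum_filter, Finset.sum_const, nsmul_eq_mul]
    calc _ ≤ (49 * (4 * W) / √(q : ℝ)) * (1 / (q : ℝ)) := by
          gcongr
          exact hcard.trans (by gcongr)
      _ = _ := by field_simp; ring
  have hfin : (B.card : ℝ) ≤ 196 * W * (2 * (1 / √(m : ℝ))) := by
    calc (B.card : ℝ) = ∑ p ∈ B, (1 : ℝ) := by simp
      _ ≤ ∑ p ∈ B, ∑ q ∈ R, if q ∣ p ^ 2 - 1 then 1 / (q : ℝ) else 0 := Finset.sum_le_sum hstep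
      _ = ∑ q ∈ R, ∑ p ∈ B, if q ∣ p ^ 2 - 1 then 1 / (q : ℝ) else 0 := Finset.sum_comm
      _ ≤ ∑ q ∈ R, 196 * W * (1 / ((q : ℝ) * √(q : ℝ))) := Finset.sum_le_sum hq
      _ = 196 * W * ∑ q ∈ R, (1 / ((q : ℝ) * √(q : ℝ))) := by rw [Finset.mul_sum]
      _ ≤ 196 * W * ∑ q ∈ Finset.Ioc m ⌊T⌋₊, (1 / ((q : ℝ) * √(q : ℝ))) := by
          gcongr
          exact Finset.filter_subset _ _
      _ ≤ _ := by gcongr; exact aux_tail m _ hm1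
  refine hfin.trans ?_
  have hzm : √z / 2 ≤ √(m : ℝ) := by
    have h1 : z < m + 1 := Nat.lt_floor_add_one z
    have h2 : (1 : ℝ) ≤ m := by exact_mod_cast hm1
    apply Real.le_sqrt_of_sq_le
    rw [div_pow, Real.sq_sqrt (by linarith)]
    linarith
  have hz0 : 0 < √z := Real.sqrt_pos.2 (by linarith)
  have h1 : 1 / √(m : ℝ) ≤ 1 / (√z / 2) := one_div_le_one_div_of_le (by positivity) hzm
  calc _ ≤ 196 * W * (2 * (1 / (√z / 2))) := by gcongr
    _ = _ := by field_simp; ring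

lemma aux_main : ∃ C : ℝ, 0 < C ∧ ∀ᶠ x : ℝ in atTop,
      ({p : ℕ | p.Prime ∧ 3 ≤ p ∧ (p : ℝ) ≤ x ∧
          ((p ^ 2 - 1 : ℕ) : ℝ) / (Nat.totient (p ^ 2 - 1) : ℝ) >
            (Real.log (Real.log (Real.log x))) ^ ((1 : ℝ) / 3)}.ncard : ℝ) ≤
        C * (Nat.primeCounting ⌊x⌋₊ : ℝ) /
          (Real.log (Real.log (Real.log x))) ^ ((1 : ℝ) / 6) := by
  refine ⟨784 * Real.exp 3, by positivity, ?_⟩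
  have hL : Tendsto (fun x : ℝ => Real.log (Real.log (Real.log x))) atTop atTop :=
    Real.tendsto_log_atTop.comp (Real.tendsto_log_atTop.comp Real.tendsto_log_atTop)
  have hsq : ∀ᶠ x : ℝ in atTop, Real.log x ^ 2 ≤ √x := by
    have h := (isLittleO_log_rpow_atTop (r := 1 / 4) (by norm_num)).bound (c := 1) (by norm_num)
    filter_upwards [h, eventually_gt_atTop 1] with x hx hx1
    have h0 := Real.log_pos hx1
    rw [Real.norm_eq_abs, Real.norm_eq_abs, abs_of_pos h0,
      abs_of_nonneg (Real.rpow_nonneg (by linarith) _), one_mul] at hx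
    calc Real.log x ^ 2 ≤ (x ^ (1 / 4 : ℝ)) ^ 2 := by gcongr
      _ = √x := by
        rw [Real.sqrt_eq_rpow, ← Real.rpow_natCast, ← Real.rpow_mul (by linarith)]
        norm_num
  filter_upwards [aux_pi, hsq, eventually_gt_atTop 1,
    Real.tendsto_log_atTop.eventually_ge_atTop (Real.exp 1),
    hL.eventually_ge_atTop ((Real.exp 6) ^ 3)] with x hpi hlx hx hT hLx
  set L := Real.log (Real.log (Real.log x)) with hLdef
  have hL0 : 0 < L := lt_of_lt_of_le (by positivity) hLx
  set S := {p : ℕ | p.Prime ∧ 3 ≤ p ∧ (p : ℝ) ≤ x ∧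
          ((p ^ 2 - 1 : ℕ) : ℝ) / (Nat.totient (p ^ 2 - 1) : ℝ) > L ^ ((1 : ℝ) / 3)} with hS
  have hfin : S.Finite := (Set.finite_Iic ⌊x⌋₊).subset fun p hp => Nat.le_floor hp.2.2.1
  set z := L ^ ((1 : ℝ) / 3) / Real.exp 6 with hz
  have hzmul : z * Real.exp 6 = L ^ ((1 : ℝ) / 3) := div_mul_cancel₀ _ (Real.exp_pos 6).ne'
  have hz1 : 1 ≤ z := by
    rw [hz, le_div_iff₀ (Real.exp_pos 6), one_mul]
    calc Real.exp 6 = ((Real.exp 6) ^ 3) ^ ((1 : ℝ) / 3) := by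
          rw [← Real.rpow_natCast, ← Real.rpow_mul (Real.exp_pos 6).le]; norm_num
      _ ≤ _ := by gcongr
  have hmain := aux_bad x z hx hz1 hT hlx hpi hfin.toFinset (by
    intro p hp
    rw [Set.Finite.mem_toFinset] at hp
    rw [hzmul]
    exact hp)
  rw [Set.ncard_eq_toFinset_card S hfin]
  refine hmain.trans (le_of_eq ?_)
  have hsz : √z = L ^ ((1 : ℝ) / 6) / Real.exp 3 := by
    rw [hz, Real.sqrt_div (Real.rpow_nonneg hL0.le _), Real.sqrt_eq_rpow, ← Real.rpow_mul hL0.le,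
      Real.sqrt_eq_rpow, ← Real.exp_mul]
    norm_num
  rw [hsz]
  have := Real.rpow_pos_of_pos hL0 ((1 : ℝ) / 6)
  field_simp

theorem type4_inconvenient_primes :
    (∃ C : ℝ, 0 < C ∧ ∀ᶠ x : ℝ in atTop,
      ({p : ℕ | p.Prime ∧ 3 ≤ p ∧ (p : ℝ) ≤ x ∧
          ((p ^ 2 - 1 : ℕ) : ℝ) / (Nat.totient (p ^ 2 - 1) : ℝ) >
            (Real.log (Real.log (Real.log x))) ^ ((1 : ℝ) / 3)}.ncard : ℝ) ≤
        C * (Nat.primeCounting ⌊x⌋₊ : ℝ) /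
          (Real.log (Real.log (Real.log x))) ^ ((1 : ℝ) / 6)) ∧
    Tendsto (fun x : ℝ =>
      ({p : ℕ | p.Prime ∧ 3 ≤ p ∧ (p : ℝ) ≤ x ∧
          ((p ^ 2 - 1 : ℕ) : ℝ) / (Nat.totient (p ^ 2 - 1) : ℝ) >
            (Real.log (Real.log (Real.log x))) ^ ((1 : ℝ) / 3)}.ncard : ℝ) /
        (Nat.primeCounting ⌊x⌋₊ : ℝ)) atTop (𝓝 0) := by
  refine ⟨aux_main, ?_⟩
  obtain ⟨C, hC, h⟩ := aux_main
  have hL : Tendsto (fun x : ℝ => Real.log (Real.log (Real.log x))) atTop atTop :=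
    Real.tendsto_log_atTop.comp (Real.tendsto_log_atTop.comp Real.tendsto_log_atTop)
  have hL6 : Tendsto (fun x : ℝ => C / Real.log (Real.log (Real.log x)) ^ ((1 : ℝ) / 6)) atTop (𝓝 0) :=
    ((tendsto_rpow_atTop (by norm_num)).comp hL).const_div_atTop C
  refine tendsto_of_tendsto_of_tendsto_of_le_of_le' tendsto_const_nhds hL6
    (Eventually.of_forall fun x => by positivity) ?_
  filter_upwards [h, eventually_ge_atTop 2] with x hx hx2
  have hpos : 0 < (Nat.primeCounting ⌊x⌋₊ : ℝ) := by
    have h1 : 2 ≤ ⌊x⌋₊ := Nat.le_floor (by exact_mod_cast hx2)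
    have h2 := Nat.monotone_primeCounting h1
    have h3 : Nat.primeCounting 2 = 1 := by decide
    rw [h3] at h2
    exact_mod_cast h2
  rw [div_le_iff₀ hpos]
  refine hx.trans (le_of_eq ?_)
  ring
end

section
/- Fix a positive integer ℓ. There exists a constant C > 0 (depending only on ℓ) such that for all sufficiently large real x, Σ_{p ≤ x, p prime, p > ℓ} (p−ℓ)/φ(p−ℓ) ≤ C·π(x) and Σ_{p ≤ x, p prime} (p+ℓ)/φ(p+ℓ) ≤ C·π(x). -/
open Filter Topology

open Finset in
lemma ap_u_dvd (q a n : ℕ) (hq : q.Prime) :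
    (n.factorial / q ^ n.factorial.factorization q) ∣ ∏ m ∈ range n, (a + q * m) := by
  set u := n.factorial / q ^ n.factorial.factorization q with hu
  have hcop : q.Coprime u := Nat.coprime_ordCompl hq n.factorial_ne_zero
  have hun : u ∣ n.factorial := Nat.ordCompl_dvd _ _
  rcases Nat.lt_or_ge 1 u with h1 | h1
  · obtain ⟨b, hb⟩ := Nat.exists_mul_mod_eq_one_of_coprime hcop h1
    have hb' : q * b ≡ 1 [MOD u] := by
      unfold Nat.ModEq; rw [hb.2, Nat.mod_eq_of_lt h1]
    have hbu : u.Coprime (b ^ n) := by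
      apply Nat.Coprime.pow_right
      have : (q * b).gcd u = 1 := by rw [hb'.gcd_eq]; simp
      exact (Nat.Coprime.coprime_mul_left (show (q*b).Coprime u from this)).symm
    apply hbu.dvd_of_dvd_mul_right
    have h2 : (∏ m ∈ range n, (a + q * m)) * b ^ n ≡ ∏ m ∈ range n, (a * b + m) [MOD u] := by
      have : (∏ m ∈ range n, (a + q * m)) * b ^ n = ∏ m ∈ range n, ((a + q * m) * b) := by
        rw [prod_mul_distrib]; simp
      rw [this]
      apply Nat.ModEq.prod
      intro m _
      have : (a + q * m) * b = a * b + (q * b) * m := by ring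
      rw [this]
      have h := (hb'.mul_right m).add_left (a * b)
      simpa using h
    rw [h2.dvd_iff dvd_rfl, ← Nat.ascFactorial_eq_prod_range]
    exact hun.trans (Nat.factorial_dvd_ascFactorial _ _)
  · have : u = 1 := by
      have : 0 < u := Nat.pos_of_dvd_of_pos hun n.factorial_pos
      omega
    rw [this]; exact one_dvd _

open Finset in
lemma ap_prod_le (q a n : ℕ) (hq : q.Prime) (haq : a < q) :
    ∏ m ∈ (range n).filter (fun m => (a + q * m).Prime), (a + q * m) ≤ q ^ (4 * n) := by
  have hinj : Function.Injective (fun m => a + q * m) := by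
    intro x y h
    have : q * x = q * y := by simpa using h
    exact Nat.eq_of_mul_eq_mul_left hq.pos this
  set T := (range n).filter (fun m => (a + q * m).Prime) with hT
  rw [← prod_filter_mul_prod_filter_not T (fun m => a + q * m ≤ n)]
  have h1 : ∏ m ∈ T with a + q * m ≤ n, (a + q * m) ≤ q ^ (2 * n) := by
    calc _ = ∏ p ∈ (T.filter (fun m => a + q * m ≤ n)).image (fun m => a + q * m), p := by
          rw [prod_image]; exact fun x _ y _ h => hinj h
      _ ≤ primorial n := by
          unfold primorial
          apply prod_le_prod_of_subset_of_one_le'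
          · intro p hp
            simp only [mem_image, mem_filter, hT, mem_range] at hp ⊢
            obtain ⟨m, ⟨⟨_, h2⟩, h3⟩, rfl⟩ := hp
            exact ⟨by omega, h2⟩
          · intro p hp _
            exact (mem_filter.1 hp).2.one_lt.le
      _ ≤ 4 ^ n := primorial_le_four_pow n
      _ ≤ q ^ (2 * n) := by
          rw [pow_mul]
          apply Nat.pow_le_pow_left
          nlinarith [hq.two_le]
  have h2 : ∏ m ∈ T with ¬ (a + q * m ≤ n), (a + q * m) ≤ q ^ (2 * n) := by
    set u := n.factorial / q ^ n.factorial.factorization q with hu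
    have hu0 : 0 < u := Nat.ordCompl_pos _ n.factorial_ne_zero
    have hun : u ∣ n.factorial := Nat.ordCompl_dvd _ _
    have hd1 : ∏ m ∈ T with ¬ (a + q * m ≤ n), (a + q * m) ∣ ∏ m ∈ range n, (a + q * m) :=
      prod_dvd_prod_of_subset _ _ _ ((filter_subset _ _).trans (filter_subset _ _))
    have hcop : (∏ m ∈ T with ¬ (a + q * m ≤ n), (a + q * m)).Coprime u := by
      apply Nat.Coprime.prod_left
      intro m hm
      simp only [hT, mem_filter] at hm
      apply Nat.Coprime.coprime_dvd_right hun
      rw [hm.1.2.coprime_iff_not_dvd, hm.1.2.dvd_factorial]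
      exact hm.2
    have hd := hcop.mul_dvd_of_dvd_of_dvd hd1 (ap_u_dvd q a n hq)
    rcases Nat.eq_zero_or_pos (∏ m ∈ range n, (a + q * m)) with h0 | h0
    · -- a = 0 case
      have hle : ∏ m ∈ T with ¬ (a + q * m ≤ n), (a + q * m) ≤
          ∏ m ∈ T with ¬ (a + q * m ≤ n), q := by
        apply prod_le_prod'
        intro m hm
        simp only [hT, mem_filter, mem_range] at hm
        rw [prod_eq_zero_iff] at h0
        obtain ⟨k, _, hk⟩ := h0
        have ha : a = 0 := by omega
        subst ha
        have hp := hm.1.2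
        rw [zero_add] at hp ⊢
        have := (Nat.prime_mul_iff.1 hp)
        rcases this with h | h
        · rw [h.2]; simp
        · exact absurd h.2 hq.one_lt.ne'
      refine hle.trans ?_
      rw [prod_const]
      apply Nat.pow_le_pow_right hq.pos
      calc _ ≤ (range n).card := card_le_card ((filter_subset _ _).trans (filter_subset _ _))
        _ ≤ 2 * n := by rw [card_range]; omega
    have hle := Nat.le_of_dvd h0 hd
    have hP : ∏ m ∈ range n, (a + q * m) ≤ q ^ n * n.factorial := by
      calc _ ≤ ∏ m ∈ range n, (q * (m + 1)) := by
            apply prod_le_prod'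
            intro m _
            nlinarith
        _ = _ := by rw [prod_mul_distrib, prod_const, card_range, prod_range_add_one_eq_factorial]
    have hv : n.factorial.factorization q ≤ n := by
      have := Fact.mk hq
      have h := sub_one_mul_padicValNat_factorial (p := q) n
      rw [Nat.factorization_def _ hq]
      have : 1 ≤ q - 1 := by have := hq.two_le; omega
      nlinarith [Nat.sub_le n (q.digits n).sum]
    have hfac : q ^ n.factorial.factorization q * u = n.factorial :=
      Nat.ordProj_mul_ordCompl_eq_self _ _
    have : (∏ m ∈ T with ¬ (a + q * m ≤ n), (a + q * m)) * u ≤ q ^ (2 * n) * u := by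
      calc _ ≤ q ^ n * n.factorial := hle.trans hP
        _ = q ^ (n + n.factorial.factorization q) * u := by rw [pow_add, mul_assoc, hfac]
        _ ≤ _ := Nat.mul_le_mul_right _ (Nat.pow_le_pow_right hq.pos (by omega))
    exact Nat.le_of_mul_le_mul_right this hu0
  calc _ ≤ q ^ (2 * n) * q ^ (2 * n) := Nat.mul_le_mul h1 h2
    _ = _ := by rw [← pow_add]; congr 1; ring

open Finset in
lemma ap_card_le (q a n : ℕ) (hq : q.Prime) (haq : a < q) (ha : 0 < a) (hn : 2 ≤ n) :
    (((range n).filter (fun m => (a + q * m).Prime)).card : ℝ) ≤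
      12 * n * Real.log q / Real.log n := by
  set T := (range n).filter (fun m => (a + q * m).Prime) with hT
  set s := Nat.sqrt n
  have hlogn : 0 < Real.log n := Real.log_pos (by exact_mod_cast hn)
  have hlogq : 1 / 2 ≤ Real.log q := by
    have h1 : Real.log 2 ≤ Real.log q := Real.log_le_log (by norm_num) (by exact_mod_cast hq.two_le)
    linarith [Real.log_two_gt_d9]
  have hsplit : T.card ≤ s + (T.filter (fun m => ¬ m < s)).card := by
    rw [← card_filter_add_card_filter_not (s := T) (fun m => m < s)]
    gcongr
    calc _ ≤ (range s).card := card_le_card (fun m hm => by simp at hm ⊢; exact hm.2)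
      _ = s := card_range s
  set T' := T.filter (fun m => ¬ m < s) with hT'
  have hpow : (s + 1) ^ T'.card ≤ q ^ (4 * n) := by
    calc _ = ∏ m ∈ T', (s + 1) := by rw [prod_const]
      _ ≤ ∏ m ∈ T', (a + q * m) := by
          apply prod_le_prod'
          intro m hm
          simp only [hT', mem_filter] at hm
          nlinarith [hq.two_le]
      _ ≤ ∏ m ∈ T, (a + q * m) := by
          apply prod_le_prod_of_subset_of_one_le' (filter_subset _ _)
          intro m hm _
          exact (mem_filter.1 hm).2.one_lt.le
      _ ≤ _ := ap_prod_le q a n hq haq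
  have hpow2 : n ^ T'.card ≤ q ^ (8 * n) := by
    calc n ^ T'.card ≤ ((s + 1) * (s + 1)) ^ T'.card := by
          apply Nat.pow_le_pow_left (Nat.lt_succ_sqrt n).le
      _ = ((s + 1) ^ T'.card) ^ 2 := by rw [← sq, ← pow_mul, ← pow_mul, mul_comm]
      _ ≤ (q ^ (4 * n)) ^ 2 := Nat.pow_le_pow_left hpow 2
      _ = _ := by rw [← pow_mul]; congr 1; ring
  have hlog : (T'.card : ℝ) * Real.log n ≤ 8 * n * Real.log q := by
    have h : ((n : ℝ) ^ T'.card) ≤ (q : ℝ) ^ (8 * n) := by exact_mod_cast hpow2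
    have h2 := Real.log_le_log (by positivity) h
    rw [Real.log_pow, Real.log_pow] at h2
    push_cast at h2
    exact h2
  have hs : (s : ℝ) * Real.log n ≤ 2 * n := by
    have h1 : (s : ℝ) ≤ Real.sqrt n := Real.nat_sqrt_le_real_sqrt
    have h2 : Real.log n ≤ 2 * Real.sqrt n := by
      have := Real.log_le_self (Real.sqrt_nonneg (n : ℝ))
      rw [Real.log_sqrt (by positivity)] at this
      linarith
    calc (s : ℝ) * Real.log n ≤ Real.sqrt n * (2 * Real.sqrt n) := by gcongr
      _ = 2 * (Real.sqrt n * Real.sqrt n) := by ring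
      _ = _ := by rw [Real.mul_self_sqrt (by positivity)]
  rw [le_div_iff₀ hlogn]
  have : (T.card : ℝ) ≤ s + T'.card := by exact_mod_cast hsplit
  have hnn : (0:ℝ) ≤ n := by positivity
  nlinarith

open Finset in
lemma ap_count_le (q a N : ℕ) (hq : q.Prime) (haq : a < q) (ha : 0 < a) (hN : q * q ≤ N) :
    (((range (N + 1)).filter (fun p => p.Prime ∧ p % q = a)).card : ℝ) ≤
      48 * (Real.log q / q) * (N / Real.log N) := by
  have hq2 := hq.two_le
  have hN4 : 4 ≤ N := by nlinarith
  have hqle : q ≤ N / q := (Nat.le_div_iff_mul_le hq.pos).2 hN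
  have hcard : ((range (N + 1)).filter (fun p => p.Prime ∧ p % q = a)).card ≤
      ((range (N / q + 1)).filter (fun m => (a + q * m).Prime)).card := by
    apply card_le_card_of_injOn (fun p => p / q)
    · intro p hp
      simp only [coe_filter, mem_range, Set.mem_ofPred_eq] at hp ⊢
      refine ⟨Nat.lt_succ_of_le (Nat.div_le_div_right (by omega)), ?_⟩
      rw [← hp.2.2, Nat.mod_add_div]; exact hp.2.1
    · intro p hp r hr h
      simp only [coe_filter, mem_range, Set.mem_ofPred_eq] at hp hr
      simp only at h
      rw [← Nat.mod_add_div p q, ← Nat.mod_add_div r q, hp.2.2, hr.2.2, h]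
  have h1 := ap_card_le q a (N / q + 1) hq haq ha (by omega)
  have hq0 : (0:ℝ) < q := by exact_mod_cast hq.pos
  have hNR : (4:ℝ) ≤ N := by exact_mod_cast hN4
  have hn_up : ((N / q + 1 : ℕ) : ℝ) ≤ 2 * (N / q) := by
    have h2 : ((N / q : ℕ) : ℝ) ≤ N / q := Nat.cast_div_le
    have h3 : (1:ℝ) ≤ N / q := by
      rw [le_div_iff₀ hq0]
      have : q ≤ N := by nlinarith
      simpa using (by exact_mod_cast this : (q:ℝ) ≤ N)
    push_cast; linarith
  have hlogN : 0 < Real.log N := Real.log_pos (by linarith)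
  have hn_low : Real.log N ≤ 2 * Real.log ((N / q + 1 : ℕ) : ℝ) := by
    have h2 : N ≤ (N / q + 1) ^ 2 := by
      have := Nat.lt_mul_div_succ N hq.pos
      nlinarith
    have h3 : (N : ℝ) ≤ ((N / q + 1 : ℕ) : ℝ) ^ 2 := by exact_mod_cast h2
    have h4 := Real.log_le_log (by linarith) h3
    rwa [Real.log_pow] at h4
  have hlq : 0 ≤ Real.log q := Real.log_natCast_nonneg q
  calc _ ≤ _ := by exact_mod_cast hcard
    _ ≤ _ := h1
    _ ≤ 12 * (2 * (N / q)) * Real.log q / (Real.log N / 2) := by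
        gcongr
        linarith
    _ = _ := by field_simp; ring

lemma pi_lower : ∀ᶠ N : ℕ in atTop, (N : ℝ) / Real.log N ≤ 2 * (Nat.primeCounting N : ℝ) := by
  have h := (Real.isLittleO_log_id_atTop.comp_tendsto
    (tendsto_natCast_atTop_atTop (R := ℝ))).bound (show (0:ℝ) < 1/20 by norm_num)
  filter_upwards [h, eventually_ge_atTop 40] with N hN hN2
  have hNR : (40:ℝ) ≤ N := by exact_mod_cast hN2
  have hlog : 0 < Real.log N := Real.log_pos (by linarith)
  simp only [Function.comp, id, Real.norm_eq_abs] at hN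
  rw [abs_of_pos hlog, abs_of_pos (by linarith)] at hN
  have h1 := Chebyshev.pi_ge N
  have h2 : Real.log ((N:ℝ) + 1) ≤ Real.log N + 1 := by
    have : (N:ℝ) + 1 ≤ N * 2 := by linarith
    have h3 := Real.log_le_log (by linarith) this
    rw [Real.log_mul (by linarith) (by norm_num)] at h3
    linarith [Real.log_two_lt_d9]
  rw [div_le_iff₀ hlog] at h1 ⊢
  nlinarith [Real.log_two_gt_d9]

open Finset in
lemma summable_prime_log :
    Summable (fun q : ℕ => if q.Prime then 1 / ((q : ℝ) * Real.log q) else 0) := by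
  set f : ℕ → ℝ := fun q : ℕ => if q.Prime then 1 / ((q : ℝ) * Real.log q) else 0 with hf
  have hf0 : ∀ q, 0 ≤ f q := by
    intro q
    simp only [hf]
    split_ifs
    · have := Real.log_natCast_nonneg q
      positivity
    · exact le_rfl
  have hsum : Summable (fun k : ℕ => 8 * (1 / (k : ℝ) ^ 2)) :=
    (Real.summable_one_div_nat_pow.2 (by norm_num)).mul_left 8
  have hblock : ∀ K : ℕ, 1 ≤ K →
      ∑ q ∈ Ico (2 ^ K) (2 ^ (K + 1)), f q ≤ 8 * (1 / (K : ℝ) ^ 2) := by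
    intro K hK
    have hKR : (1:ℝ) ≤ K := by exact_mod_cast hK
    have hl2 : 0 < Real.log 2 := Real.log_pos (by norm_num)
    have hterm : ∀ q ∈ Ico (2 ^ K) (2 ^ (K + 1)),
        f q ≤ (if q.Prime then Real.log q else 0) * (1 / (2 ^ K * (K * Real.log 2) ^ 2)) := by
      intro q hq
      simp only [hf]
      split_ifs with hp
      · rw [mem_Ico] at hq
        have h1 : (2:ℝ) ^ K ≤ q := by exact_mod_cast hq.1
        have h2 : K * Real.log 2 ≤ Real.log q := by
          rw [← Real.log_pow]
          exact Real.log_le_log (by positivity) h1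
        have h3 : 0 < Real.log q := lt_of_lt_of_le (by positivity) h2
        have h4 : (0:ℝ) < q := by exact_mod_cast hp.pos
        calc 1 / ((q:ℝ) * Real.log q) = Real.log q * (1 / (q * Real.log q ^ 2)) := by
              field_simp
          _ ≤ _ := by gcongr
      · simp
    refine (sum_le_sum hterm).trans ?_
    rw [← sum_mul]
    have hth : ∑ q ∈ Ico (2 ^ K : ℕ) (2 ^ (K + 1)), (if q.Prime then Real.log q else 0) ≤
        Real.log 4 * 2 ^ (K + 1) := by
      have h := Chebyshev.theta_le_log4_mul_x (x := ((2 ^ (K + 1) : ℕ) : ℝ)) (by positivity)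
      rw [Chebyshev.theta_eq_sum_Icc, Nat.floor_natCast, sum_filter] at h
      refine le_trans ?_ (h.trans (le_of_eq (by push_cast; rfl)))
      apply sum_le_sum_of_subset_of_nonneg
      · intro q hq; simp only [mem_Ico, mem_Icc] at hq ⊢; omega
      · intro q _ _
        split_ifs
        · exact Real.log_natCast_nonneg q
        · exact le_rfl
    have h4 : Real.log 4 = 2 * Real.log 2 := by
      rw [show (4:ℝ) = 2 ^ 2 by norm_num, Real.log_pow]; norm_num
    calc _ ≤ Real.log 4 * 2 ^ (K + 1) * (1 / (2 ^ K * (K * Real.log 2) ^ 2)) := by gcongr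
      _ = (4 / Real.log 2) * (1 / (K:ℝ) ^ 2) := by
          rw [h4, pow_succ]; field_simp; try norm_num
      _ ≤ _ := by
          gcongr
          rw [div_le_iff₀ hl2]
          linarith [Real.log_two_gt_d9]
  have hind : ∀ K : ℕ, ∑ q ∈ range (2 ^ (K + 1)), f q ≤ ∑ k ∈ range (K + 1), 8 * (1 / (k : ℝ) ^ 2) := by
    intro K
    induction K with
    | zero =>
      simp [hf, sum_range_succ, Nat.not_prime_one, Nat.not_prime_zero]
    | succ K ih =>
      rw [sum_range_succ _ (K + 1),
        ← sum_range_add_sum_Ico _ (Nat.pow_le_pow_right (by norm_num : 0 < 2) (Nat.le_succ (K + 1)))]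
      have := hblock (K + 1) (by omega)
      exact add_le_add ih this
  apply summable_of_sum_range_le (c := ∑' k : ℕ, 8 * (1 / (k : ℝ) ^ 2)) hf0
  intro n
  calc _ ≤ ∑ q ∈ range (2 ^ (n + 1)), f q := by
        apply sum_le_sum_of_subset_of_nonneg
        · apply range_subset_range.2
          exact (Nat.lt_two_pow_self.le).trans (Nat.pow_le_pow_right (by norm_num) (Nat.le_succ n))
        · intro i _ _; exact hf0 i
    _ ≤ _ := hind n
    _ ≤ _ := hsum.sum_le_tsum _ (fun k _ => by positivity)

open Finset in
lemma tail_small : ∃ Q : ℕ, ∀ S : Finset ℕ, (∀ q ∈ S, q.Prime ∧ Q < q) →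
    ∑ q ∈ S, 8 / ((q : ℝ) * Real.log q) ≤ 1 := by
  obtain ⟨s, hs⟩ := summable_iff_vanishing_norm.1 summable_prime_log (1 / 8) (by norm_num)
  refine ⟨s.sup id, fun S hS => ?_⟩
  have hd : Disjoint S s := by
    rw [disjoint_left]
    intro q hq hqs
    have : q ≤ s.sup id := le_sup (f := id) hqs
    have := (hS q hq).2
    omega
  have h := (le_abs_self _).trans_lt (hs S hd)
  have : ∑ q ∈ S, 8 / ((q : ℝ) * Real.log q) =
      8 * ∑ q ∈ S, (if q.Prime then 1 / ((q : ℝ) * Real.log q) else 0) := by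
    rw [mul_sum]
    apply sum_congr rfl
    intro q hq
    rw [if_pos (hS q hq).1]; ring
  rw [this]; linarith

open Finset in
lemma exp_jensen (S : Finset ℕ) (hS : ∀ q ∈ S, q.Prime)
    (hw : ∑ q ∈ S, 8 / ((q : ℝ) * Real.log q) ≤ 1) :
    Real.exp (∑ q ∈ S, 2 / (q : ℝ)) ≤
      1 + ∑ q ∈ S, 8 / ((q : ℝ) * Real.log q) * (q : ℝ) ^ (1 / 4 : ℝ) := by
  have h0 : ∀ q ∈ S, 0 < (q : ℝ) ∧ 0 < Real.log q := fun q hq =>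
    ⟨by exact_mod_cast (hS q hq).pos, Real.log_pos (by exact_mod_cast (hS q hq).one_lt)⟩
  have hw0 : ∀ q ∈ S, 0 ≤ 8 / ((q : ℝ) * Real.log q) := fun q hq => by
    have := h0 q hq
    have := this.1
    have := (h0 q hq).2
    positivity
  have h := convexOn_exp.map_add_sum_le (t := S) (w := fun q : ℕ => 8 / ((q : ℝ) * Real.log q))
    (p := fun q : ℕ => Real.log q / 4) (v := 1 - ∑ q ∈ S, 8 / ((q : ℝ) * Real.log q)) (q := 0)
    hw0 (by ring) (fun _ _ => Set.mem_univ _) (by linarith) (Set.mem_univ _)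
  simp only [smul_eq_mul, mul_zero, zero_add, Real.exp_zero, mul_one] at h
  have e1 : ∑ q ∈ S, 2 / (q : ℝ) = ∑ q ∈ S, 8 / ((q : ℝ) * Real.log q) * (Real.log q / 4) := by
    apply sum_congr rfl
    intro q hq
    have h1 := (h0 q hq).1
    have h2 := (h0 q hq).2
    field_simp; norm_num
  have e2 : ∑ q ∈ S, 8 / ((q : ℝ) * Real.log q) * (q : ℝ) ^ (1 / 4 : ℝ) =
      ∑ q ∈ S, 8 / ((q : ℝ) * Real.log q) * Real.exp (Real.log q / 4) := by
    apply sum_congr rfl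
    intro q hq
    rw [Real.rpow_def_of_pos (h0 q hq).1]
    congr 2; ring
  rw [e1, e2]
  have := sum_nonneg hw0
  linarith

open Finset in
lemma ratio_eq (n : ℕ) (hn : 0 < n) :
    (n : ℝ) / (Nat.totient n : ℝ) = ∏ q ∈ n.primeFactors, (1 - (q : ℝ)⁻¹)⁻¹ := by
  have h := Nat.totient_eq_mul_prod_factors n
  have h2 : (Nat.totient n : ℝ) = n * ∏ p ∈ n.primeFactors, (1 - (p : ℝ)⁻¹) := by
    have h3 := congrArg (fun t : ℚ => (t : ℝ)) h
    push_cast at h3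
    exact h3
  have hn0 : (n : ℝ) ≠ 0 := by exact_mod_cast hn.ne'
  rw [h2, prod_inv_distrib, div_mul_eq_div_div, div_self hn0, one_div]

open Finset in
lemma ratio_le (Q : ℕ) (hQ : ∀ S : Finset ℕ, (∀ q ∈ S, q.Prime ∧ Q < q) →
      ∑ q ∈ S, 8 / ((q : ℝ) * Real.log q) ≤ 1) (n M : ℕ) (hn : 0 < n) (hM : n < (M + 1) ^ 3) :
    (n : ℝ) / (Nat.totient n : ℝ) ≤ 2 ^ (Q + 3) *
      (1 + ∑ q ∈ (range (M + 1)).filter (fun q => q.Prime ∧ Q < q),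
        if q ∣ n then 8 / ((q : ℝ) * Real.log q) * (q : ℝ) ^ (1 / 4 : ℝ) else 0) := by
  rw [ratio_eq n hn]
  have hbd : ∀ q : ℕ, q.Prime → 0 ≤ (1 - (q : ℝ)⁻¹)⁻¹ ∧ (1 - (q : ℝ)⁻¹)⁻¹ ≤ 2 ∧
      (1 - (q : ℝ)⁻¹)⁻¹ ≤ Real.exp (2 / q) := by
    intro q hq
    have h2 : (2:ℝ) ≤ q := by exact_mod_cast hq.two_le
    have h3 : (q : ℝ)⁻¹ ≤ 1 / 2 := by
      rw [inv_le_comm₀ (by linarith) (by norm_num)]; linarith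
    have h4 : 0 < (q : ℝ)⁻¹ := by positivity
    have h5 : 0 < 1 - (q : ℝ)⁻¹ := by linarith
    refine ⟨by positivity, ?_, ?_⟩
    · rw [inv_le_comm₀ h5 (by norm_num)]; linarith
    · have h6 := Real.add_one_le_exp (2 / (q:ℝ))
      refine le_trans ?_ h6
      rw [inv_le_iff_one_le_mul₀ h5, div_eq_mul_inv]
      nlinarith
  set P := n.primeFactors with hP
  have hPp : ∀ q ∈ P, q.Prime := fun q hq => Nat.prime_of_mem_primeFactors hq
  set S := P.filter (fun q => Q < q ∧ q ≤ M) with hS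
  rw [← prod_filter_mul_prod_filter_not P (fun q => Q < q ∧ q ≤ M), mul_comm]
  have hmid : ∏ q ∈ S, (1 - (q : ℝ)⁻¹)⁻¹ ≤
      1 + ∑ q ∈ (range (M + 1)).filter (fun q => q.Prime ∧ Q < q),
        if q ∣ n then 8 / ((q : ℝ) * Real.log q) * (q : ℝ) ^ (1 / 4 : ℝ) else 0 := by
    have hSP : ∀ q ∈ S, q.Prime := fun q hq => hPp q (filter_subset _ _ hq)
    calc _ ≤ ∏ q ∈ S, Real.exp (2 / (q:ℝ)) :=
          prod_le_prod (fun q hq => (hbd q (hSP q hq)).1) (fun q hq => (hbd q (hSP q hq)).2.2)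
      _ = Real.exp (∑ q ∈ S, 2 / (q:ℝ)) := by rw [Real.exp_sum]
      _ ≤ 1 + ∑ q ∈ S, 8 / ((q : ℝ) * Real.log q) * (q : ℝ) ^ (1 / 4 : ℝ) := by
          apply exp_jensen S hSP
          apply hQ
          intro q hq
          exact ⟨hSP q hq, (mem_filter.1 hq).2.1⟩
      _ = _ := by
          rw [← sum_filter]
          congr 2
          ext q
          simp only [hS, hP, mem_filter, mem_range, Nat.mem_primeFactors]
          constructor
          · rintro ⟨⟨h1, h2, h3⟩, h4, h5⟩
            exact ⟨⟨by omega, h1, h4⟩, h2⟩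
          · rintro ⟨⟨h1, h2, h3⟩, h4⟩
            exact ⟨⟨h2, h4, hn.ne'⟩, h3, by omega⟩
  have hout : ∏ q ∈ P with ¬ (Q < q ∧ q ≤ M), (1 - (q : ℝ)⁻¹)⁻¹ ≤ 2 ^ (Q + 3) := by
    set R := P.filter (fun q => ¬ (Q < q ∧ q ≤ M)) with hR
    have hRP : ∀ q ∈ R, q.Prime := fun q hq => hPp q (filter_subset _ _ hq)
    have hbig : (P.filter (fun q => M < q)).card ≤ 2 := by
      by_contra hcon
      push Not at hcon
      have h1 : (M + 1) ^ (P.filter (fun q => M < q)).card ≤ n := by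
        calc _ = ∏ q ∈ P.filter (fun q => M < q), (M + 1) := by rw [prod_const]
          _ ≤ ∏ q ∈ P.filter (fun q => M < q), q :=
              prod_le_prod' (fun q hq => (mem_filter.1 hq).2)
          _ ≤ ∏ q ∈ P, q := prod_le_prod_of_subset_of_one_le' (filter_subset _ _)
              (fun q hq _ => (hPp q hq).one_lt.le)
          _ ≤ n := Nat.le_of_dvd hn (Nat.prod_primeFactors_dvd n)
      have h2 : (M + 1) ^ 3 ≤ (M + 1) ^ (P.filter (fun q => M < q)).card :=
        Nat.pow_le_pow_right (by omega) hcon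
      omega
    have hcard : R.card ≤ Q + 3 := by
      have hsub : R ⊆ range (Q + 1) ∪ P.filter (fun q => M < q) := by
        intro q hq
        simp only [hR, mem_filter, mem_union, mem_range] at hq ⊢
        by_cases h : q < Q + 1
        · exact Or.inl h
        · right; refine ⟨hq.1, ?_⟩
          by_contra h'
          exact hq.2 ⟨by omega, by omega⟩
      have := (card_le_card hsub).trans (card_union_le _ _)
      rw [card_range] at this
      omega
    calc _ ≤ ∏ q ∈ R, (2:ℝ) :=
          prod_le_prod (fun q hq => (hbd q (hRP q hq)).1) (fun q hq => (hbd q (hRP q hq)).2.1)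
      _ = 2 ^ R.card := by rw [prod_const]
      _ ≤ _ := pow_le_pow_right₀ (by norm_num) hcard
  apply mul_le_mul hout hmid
  · exact prod_nonneg (fun q hq => (hbd q (hPp q (filter_subset _ _ hq))).1)
  · positivity

open Finset in
lemma main_aux (ℓ Q : ℕ) (hQ : ∀ S : Finset ℕ, (∀ q ∈ S, q.Prime ∧ Q < q) →
      ∑ q ∈ S, 8 / ((q : ℝ) * Real.log q) ≤ 1) (hQl : ℓ ≤ Q) (N : ℕ) (hN : ℓ ≤ N) (hN1 : 1 ≤ N)
    (hpi : (N : ℝ) / Real.log N ≤ 2 * (Nat.primeCounting N : ℝ))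
    (F : Finset ℕ) (hF : F ⊆ (range (N + 1)).filter Nat.Prime) (g : ℕ → ℕ)
    (hg0 : ∀ p ∈ F, 0 < g p) (hg : ∀ p ∈ F, g p ≤ N + ℓ)
    (hmod : ∀ q : ℕ, q.Prime → ℓ < q → ∃ a, 0 < a ∧ a < q ∧ ∀ p ∈ F, q ∣ g p → p % q = a) :
    ∑ p ∈ F, ((g p : ℕ) : ℝ) / (Nat.totient (g p) : ℝ) ≤
      (2 ^ (Q + 3) * (1 + 768 * ∑' q : ℕ, 1 / (q : ℝ) ^ (7 / 4 : ℝ))) * Nat.primeCounting N := by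
  have hcardF : (F.card : ℝ) ≤ Nat.primeCounting N := by
    have : F.card ≤ Nat.primeCounting N := by
      rw [Nat.primeCounting, Nat.primeCounting', Nat.count_eq_card_filter_range]
      exact card_le_card hF
    exact_mod_cast this
  set M := Nat.sqrt N with hM
  have hM1 : 1 ≤ M := Nat.sqrt_pos.2 hN1
  have hM3 : N + ℓ < (M + 1) ^ 3 := by
    have h1 : N < (M + 1) * (M + 1) := Nat.lt_succ_sqrt N
    calc N + ℓ < 2 * ((M + 1) * (M + 1)) := by omega
      _ ≤ (M + 1) * ((M + 1) * (M + 1)) := Nat.mul_le_mul_right _ (by omega)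
      _ = _ := by ring
  set S := (range (M + 1)).filter (fun q => q.Prime ∧ Q < q) with hS
  have hsum : Summable (fun q : ℕ => 1 / (q : ℝ) ^ (7 / 4 : ℝ)) :=
    Real.summable_one_div_nat_rpow.2 (by norm_num)
  have hq : ∀ q ∈ S, ∑ p ∈ F, (if q ∣ g p then
        8 / ((q : ℝ) * Real.log q) * (q : ℝ) ^ (1 / 4 : ℝ) else 0) ≤
      768 * (1 / (q : ℝ) ^ (7 / 4 : ℝ)) * Nat.primeCounting N := by
    intro q hq
    simp only [hS, mem_filter, mem_range] at hq
    obtain ⟨hqM, hqp, hqQ⟩ := hq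
    obtain ⟨a, ha0, haq, ha⟩ := hmod q hqp (by omega)
    have hqq : q * q ≤ N :=
      (Nat.mul_le_mul (by omega) (by omega)).trans (Nat.sqrt_le N)
    have hc := ap_count_le q a N hqp haq ha0 hqq
    have hq0 : (0:ℝ) < q := by exact_mod_cast hqp.pos
    have hlq : 0 < Real.log q := Real.log_pos (by exact_mod_cast hqp.one_lt)
    have hc2 : ((F.filter (fun p => q ∣ g p)).card : ℝ) ≤
        48 * (Real.log q / q) * (2 * Nat.primeCounting N) := by
      refine le_trans ?_ (hc.trans (by gcongr))
      have : F.filter (fun p => q ∣ g p) ⊆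
          (range (N + 1)).filter (fun p => p.Prime ∧ p % q = a) := by
        intro p hp
        rw [mem_filter] at hp
        have := mem_filter.1 (hF hp.1)
        rw [mem_filter]
        exact ⟨this.1, this.2, ha p hp.1 hp.2⟩
      exact_mod_cast card_le_card this
    rw [← sum_filter, sum_const, nsmul_eq_mul]
    calc _ ≤ 48 * (Real.log q / q) * (2 * Nat.primeCounting N) *
          (8 / ((q : ℝ) * Real.log q) * (q : ℝ) ^ (1 / 4 : ℝ)) := by gcongr
      _ = 768 * ((q : ℝ) ^ (1 / 4 : ℝ) / (q * q)) * Nat.primeCounting N := by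
          field_simp; ring
      _ = _ := by
          congr 2
          have : (q:ℝ) * q = (q : ℝ) ^ (1 / 4 : ℝ) * (q : ℝ) ^ (7 / 4 : ℝ) := by
            rw [← Real.rpow_add hq0, ← sq, ← Real.rpow_natCast]
            norm_num
          rw [this]
          field_simp
  calc _ ≤ ∑ p ∈ F, 2 ^ (Q + 3) * (1 + ∑ q ∈ S,
        if q ∣ g p then 8 / ((q : ℝ) * Real.log q) * (q : ℝ) ^ (1 / 4 : ℝ) else 0) := by
        apply sum_le_sum
        intro p hp
        exact ratio_le Q hQ (g p) M (hg0 p hp) (lt_of_le_of_lt (hg p hp) hM3)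
    _ = 2 ^ (Q + 3) * (F.card + ∑ q ∈ S, ∑ p ∈ F,
        if q ∣ g p then 8 / ((q : ℝ) * Real.log q) * (q : ℝ) ^ (1 / 4 : ℝ) else 0) := by
        rw [← mul_sum, sum_add_distrib, sum_comm]; simp
    _ ≤ 2 ^ (Q + 3) * (Nat.primeCounting N +
        ∑ q ∈ S, 768 * (1 / (q : ℝ) ^ (7 / 4 : ℝ)) * Nat.primeCounting N) := by
        gcongr with q hqS
        exact hq q hqS
    _ = 2 ^ (Q + 3) * (1 + 768 * ∑ q ∈ S, 1 / (q : ℝ) ^ (7 / 4 : ℝ)) * Nat.primeCounting N := by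
        rw [← sum_mul, ← mul_sum]; ring
    _ ≤ _ := by
        gcongr
        exact hsum.sum_le_tsum _ (fun k _ => by positivity)

theorem reciprocal_phi_sum_bound (ℓ : ℕ) (hℓ : 0 < ℓ) :
    ∃ C : ℝ, 0 < C ∧ ∀ᶠ x : ℝ in atTop,
      (∑ p ∈ (Finset.range (⌊x⌋₊ + 1)).filter (fun p => p.Prime ∧ ℓ < p),
          ((p - ℓ : ℕ) : ℝ) / (Nat.totient (p - ℓ) : ℝ)) ≤
        C * (Nat.primeCounting ⌊x⌋₊ : ℝ) ∧
      (∑ p ∈ (Finset.range (⌊x⌋₊ + 1)).filter Nat.Prime,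
          ((p + ℓ : ℕ) : ℝ) / (Nat.totient (p + ℓ) : ℝ)) ≤
        C * (Nat.primeCounting ⌊x⌋₊ : ℝ) := by
  obtain ⟨Q₀, hQ₀⟩ := tail_small
  set Q := max Q₀ ℓ with hQdef
  have hQ : ∀ S : Finset ℕ, (∀ q ∈ S, q.Prime ∧ Q < q) →
      ∑ q ∈ S, 8 / ((q : ℝ) * Real.log q) ≤ 1 := fun S hS =>
    hQ₀ S (fun q hq => ⟨(hS q hq).1, lt_of_le_of_lt (le_max_left _ _) (hS q hq).2⟩)
  refine ⟨2 ^ (Q + 3) * (1 + 768 * ∑' q : ℕ, 1 / (q : ℝ) ^ (7 / 4 : ℝ)), ?_, ?_⟩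
  · have : 0 ≤ ∑' q : ℕ, 1 / (q : ℝ) ^ (7 / 4 : ℝ) := tsum_nonneg (fun q => by positivity)
    positivity
  have hev : ∀ᶠ N : ℕ in atTop, ℓ ≤ N ∧ 1 ≤ N ∧
      (N : ℝ) / Real.log N ≤ 2 * (Nat.primeCounting N : ℝ) :=
    (eventually_ge_atTop ℓ).and ((eventually_ge_atTop 1).and pi_lower)
  filter_upwards [(tendsto_nat_floor_atTop (α := ℝ)).eventually hev] with x hx
  obtain ⟨h1, h2, h3⟩ := hx
  constructor
  · apply main_aux ℓ Q hQ (le_max_right _ _) _ h1 h2 h3 _ _ (fun p => p - ℓ)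
    · intro p hp
      simp only [Finset.mem_filter] at hp
      show 0 < p - ℓ
      omega
    · intro p hp
      simp only [Finset.mem_filter, Finset.mem_range] at hp
      show p - ℓ ≤ _
      omega
    · intro q hq hlq
      refine ⟨ℓ, hℓ, hlq, fun p hp hd => ?_⟩
      simp only [Finset.mem_filter, Finset.mem_range] at hp
      have := (Nat.modEq_iff_dvd' hp.2.2.le).2 hd
      rw [← this, Nat.mod_eq_of_lt hlq]
    · intro p hp
      simp only [Finset.mem_filter] at hp ⊢
      exact ⟨hp.1, hp.2.1⟩
  · apply main_aux ℓ Q hQ (le_max_right _ _) _ h1 h2 h3 _ _ (fun p => p + ℓ)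
    · intro p hp
      show 0 < p + ℓ
      omega
    · intro p hp
      simp only [Finset.mem_filter, Finset.mem_range] at hp
      show p + ℓ ≤ _
      omega
    · intro q hq hlq
      refine ⟨q - ℓ, by omega, by omega, fun p hp hd => ?_⟩
      have e : (p + ℓ) ≡ (q - ℓ) + ℓ [MOD q] := by
        rw [Nat.sub_add_cancel hlq.le]
        exact ((Nat.modEq_zero_iff_dvd).2 hd).trans ((Nat.modEq_zero_iff_dvd).2 dvd_rfl).symm
      have e2 := Nat.ModEq.add_right_cancel' ℓ e
      rw [e2, Nat.mod_eq_of_lt (by omega)]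
    · exact Finset.Subset.refl _
end
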